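/- For every iterative learner M from informant and every semantically delayable learning restriction δ, there exists a canny iterative learner N such that every language that M Ex-learns from informant while satisfying δ on every informant for it is also Ex-learned from informant by N while satisfying δ on every informant for it; that is, InfδEx(M) ⊆ InfδEx(N). -/

import Mathlib

/-- `W p` is the domain of the `p`-th partial computable function
(the `W`-hypothesis space for an acceptable numbering). -/
def W (p : ℕ) : Set ℕ := {n | ((Denumerable.ofNat Nat.Partrec.Code p).eval n).Dom}

/-- A labeled datum: a natural number together with a Boolean label. -/
abbrev Datum := ℕ × Bool

/-- The initial segment `I[t]` of an informant `I`, of length `t`. -/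
def seg (I : ℕ → Datum) (t : ℕ) : List Datum := (List.range t).map I

/-- The positively labeled numbers occurring in a finite sequence. -/
def posOf (σ : List Datum) : Set ℕ := {x | (x, true) ∈ σ}

/-- The negatively labeled numbers occurring in a finite sequence. -/
def negOf (σ : List Datum) : Set ℕ := {x | (x, false) ∈ σ}

/-- A finite sequence over ℕ × Bool is consistently labeled. -/
def ConsistentSeq (σ : List Datum) : Prop :=
  ∀ x b b', (x, b) ∈ σ → (x, b') ∈ σ → b = b'

/-- `I` is an informant for the language `L`. -/
def IsInformant (L : Set ℕ) (I : ℕ → Datum) : Prop :=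
  (∀ t, ((I t).2 = true ↔ (I t).1 ∈ L)) ∧ Function.Surjective (fun t => (I t).1)

/-- `M` Ex-learns `L` from the particular informant `I`. -/
def ExLearnsFrom (M : List Datum →. ℕ) (L : Set ℕ) (I : ℕ → Datum) : Prop :=
  ∃ t₀ e, W e = L ∧ ∀ t, t₀ ≤ t → M (seg I t) = Part.some e

/-- `M` Ex-learns `L` from informant. -/
def ExLearns (M : List Datum →. ℕ) (L : Set ℕ) : Prop :=
  ∀ I, IsInformant L I → ExLearnsFrom M L I

/-- `M` is an iterative learner: its value on `σ⌢x` is computed from its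
value on `σ` and the datum `x` alone. -/
def Iterative (M : List Datum →. ℕ) : Prop :=
  ∃ h : ℕ × Datum →. ℕ, Partrec h ∧
    ∀ σ x, M (σ ++ [x]) = (M σ).bind (fun e => h (e, x))

/-- `𝓛 ∈ [ItInfEx]`: some iterative partial computable learner
Ex-learns every member of `𝓛` from informant. -/
def ItInfEx (𝓛 : Set (Set ℕ)) : Prop :=
  ∃ M : List Datum →. ℕ, Partrec M ∧ Iterative M ∧ ∀ L ∈ 𝓛, ExLearns M L

/-- A learner is canny: no single datum not occurring in `σ` causes a mind change twice. -/
def Canny (M : List Datum →. ℕ) : Prop :=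
  ∀ (σ : List Datum) (x : ℕ) (b : Bool), x ∉ σ.map Prod.fst →
    ∀ e e', M σ = Part.some e → M (σ ++ [(x, b)]) = Part.some e' → e ≠ e' →
      ∀ τ : List Datum, (σ ++ [(x, b)]) <+: τ → M (τ ++ [(x, b)]) = M τ

/-- An admissible simulating function: non-decreasing and unbounded. -/
def Admissible (s : ℕ → ℕ) : Prop := Monotone s ∧ ∀ x, ∃ t, x ≤ s t

/-- A predicate `δ` on (learner, informant) pairs is semantically delayable. -/
def SemDelayable (δ : (List Datum →. ℕ) → (ℕ → Datum) → Prop) : Prop :=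
  ∀ s : ℕ → ℕ, Admissible s →
    ∀ (M M' : List Datum →. ℕ) (I I' : ℕ → Datum),
      (∃ L, IsInformant L I) → (∃ L', IsInformant L' I') →
      (∀ t, posOf (seg I (s t)) ⊆ posOf (seg I' t) ∧
            negOf (seg I (s t)) ⊆ negOf (seg I' t) ∧
            ∃ e e', M (seg I (s t)) = Part.some e ∧ M' (seg I' t) = Part.some e' ∧
              W e' = W e) →
      δ M I → δ M' I'

/-- `L ∈ InfδEx(M)`: `M` Ex-learns `L` from informant and satisfies `δ` on every
informant for `L`. -/
def InfDeltaEx (δ : (List Datum →. ℕ) → (ℕ → Datum) → Prop)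
    (M : List Datum →. ℕ) (L : Set ℕ) : Prop :=
  ExLearns M L ∧ ∀ I, IsInformant L I → δ M I

/-!
The learner `N` simulates `M` and stores every datum that made the simulation change its mind; a
stored datum is ignored from then on. An iterative learner has no memory besides its hypothesis,
so `N` pads the hypothesis of `M` with the stored list: this leaves the language unchanged, and the
list can be read off again. A stored datum can never cause another mind change, hence `N` is canny.

On an informant `I`, the data that `N` does not ignore form a subsequence `I'` of `I`. A datum is
ignored only after its first occurrence, so `I'` is an informant for the same language. At time `t`
the learner `N` carries the hypothesis of `M` on the part of `I'` contained in `I[t]`, i.e. it is a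
delayed copy of `M` on `I'`, so semantic delayability transfers `δ`.
-/

open Encodable

section Computability

variable {α β σ : Type*} [Primcodable α] [Primcodable β] [Primcodable σ]

theorem partrec₂_foldlM {f : σ → α → Part σ} (hf : Partrec₂ f) :
    Partrec₂ fun (s : σ) (l : List α) => l.foldlM f s := by
  let next : σ × List α → ℕ × σ → Part σ := fun q r => (q.2[r.1]? : Part α).bind (f r.2)
  have hnext : Partrec₂ next :=
    Partrec.bind
      (Computable.list_getElem?.comp (Computable.snd.comp Computable.fst)
        (Computable.fst.comp Computable.snd)).ofOption
      (hf.comp (Computable.snd.comp (Computable.snd.comp Computable.fst)) Computable.snd)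
  refine (Partrec.nat_rec (Computable.list_length.comp Computable.snd)
    Computable.fst.partrec hnext).of_eq ?_
  rintro ⟨s, l⟩
  have fold_take : ∀ n ≤ l.length,
      (Nat.rec (Part.some s) (fun i acc => acc.bind fun s' => next (s, l) (i, s')) n : Part σ) =
        (l.take n).foldlM f s := by
    intro n hn
    induction n with
    | zero => rfl
    | succ n ih =>
      dsimp only
      rw [ih (by lia), ← List.take_append_getElem (show n < l.length by lia), List.foldlM_append]
      simp [next, List.getElem?_eq_getElem (show n < l.length by lia)]
  simpa using fold_take l.length le_rfl

theorem exists_partrec_leftInverse {f : α → β} (hf : Computable f) (hinj : f.Injective) :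
    ∃ g : β →. α, Partrec g ∧ ∀ a, g (f a) = Part.some a := by
  let candidate : β → ℕ → Option α := fun b n =>
    (decode n).bind fun a => bif encode (f a) == encode b then some a else none
  have hcandidate : Computable₂ candidate :=
    Computable.option_bind (Computable.decode.comp Computable.snd) <|
      Computable.cond
        (Primrec.beq.to_comp.comp (Computable.encode.comp (hf.comp Computable.snd))
          (Computable.encode.comp (Computable.fst.comp Computable.fst)))
        (Computable.option_some.comp Computable.snd) (Computable.const none)
  have candidate_sound {a a' n} (h : a' ∈ candidate (f a) n) : a' = a := by
    have hdecode : decode n = some a' ∧ a' = a := by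
      simpa [candidate, Option.bind_eq_some_iff, Bool.cond_eq_ite, hinj.eq_iff] using h
    exact hdecode.2
  refine ⟨fun b => Nat.rfindOpt (candidate b), Partrec.rfindOpt hcandidate, fun a => ?_⟩
  have hdom : (Nat.rfindOpt (candidate (f a))).Dom :=
    Nat.rfindOpt_dom.2 ⟨encode a, a, by simp [candidate]⟩
  obtain ⟨n, hn⟩ := Nat.rfindOpt_spec (Part.get_mem hdom)
  exact Part.get_eq_iff_eq_some.1 (candidate_sound hn)

end Computability

section Padding

open Nat.Partrec

/-- The hypothesis `e` padded with the number `m`: a code for the same partial function which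
additionally determines `m`. The number `m` is hard-wired as an argument that is then discarded. -/
def pad (e m : ℕ) : ℕ :=
  encode ((Code.comp (Denumerable.ofNat Code e) Code.right).curry m)

theorem W_pad (e m : ℕ) : W (pad e m) = W e := by
  ext n
  have heval : (Code.comp (Denumerable.ofNat Code e) Code.right).eval (Nat.pair m n) =
      (Denumerable.ofNat Code e).eval n := by
    simp only [Code.eval, PFun.coe_val, Nat.unpair_pair]
    exact Part.bind_some n _
  simp only [W, pad, Set.mem_ofPred_eq, Denumerable.ofNat_encode, Code.eval_curry, heval]

theorem pad_injective2 : Function.Injective2 pad := by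
  intro e e' m m' h
  obtain ⟨hcomp, rfl⟩ := Code.curry_inj (encode_injective h)
  injection hcomp with hcode
  exact ⟨(Denumerable.eqv Code).symm.injective hcode, rfl⟩

theorem computable₂_pad : Computable₂ pad :=
  Computable.encode.comp <| Code.primrec₂_curry.to_comp.comp
    (Code.primrec₂_comp.to_comp.comp ((Computable.ofNat Code).comp Computable.fst)
      (Computable.const Code.right))
    Computable.snd

end Padding

section InitialSegments

variable {I : ℕ → Datum} {L : Set ℕ} {M : List Datum →. ℕ}

theorem seg_succ (I : ℕ → Datum) (t : ℕ) : seg I (t + 1) = seg I t ++ [I t] := by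
  simp [seg, List.range_succ]

theorem mem_seg {x : Datum} {t : ℕ} : x ∈ seg I t ↔ ∃ i < t, I i = x := by
  simp [seg]

theorem ExLearnsFrom.dom (hM : Iterative M) (hL : ExLearnsFrom M L I) (t : ℕ) :
    (M (seg I t)).Dom := by
  obtain ⟨h, -, hMh⟩ := hM
  have hanti : Antitone fun n => (M (seg I n)).Dom := antitone_nat_of_succ_le fun n hn => by
    rw [seg_succ, hMh] at hn
    exact (Part.bind_dom.1 hn).1
  obtain ⟨t₀, e, -, hconv⟩ := hL
  refine hanti (le_max_left t t₀) ?_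
  simp [hconv _ (le_max_right t t₀)]

end InitialSegments

section Subsequences

variable {I : ℕ → Datum} {L : Set ℕ} {p : ℕ → Prop}

theorem IsInformant.infinite_setOf (hI : IsInformant L I) (hp : ∀ t, ∃ i, p i ∧ I i = I t) :
    {t | p t}.Infinite := by
  refine Set.Infinite.of_image (fun t => (I t).1) (Set.infinite_univ.mono fun x _ => ?_)
  obtain ⟨t, rfl⟩ := hI.2 x
  obtain ⟨i, hi, hit⟩ := hp t
  exact ⟨i, hi, congrArg Prod.fst hit⟩

theorem IsInformant.comp_nth (hI : IsInformant L I) (hp : ∀ t, ∃ i, p i ∧ I i = I t) :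
    IsInformant L (I ∘ Nat.nth p) := by
  classical
  refine ⟨fun t => hI.1 _, fun x => ?_⟩
  obtain ⟨t, rfl⟩ := hI.2 x
  obtain ⟨i, hi, hit⟩ := hp t
  exact ⟨Nat.count p i, by simp [Nat.nth_count hi, hit]⟩

variable [DecidablePred p]

theorem admissible_count (hp : {t | p t}.Infinite) : Admissible (Nat.count p) :=
  ⟨Nat.count_monotone p, fun n => ⟨Nat.nth p n, (Nat.count_nth_of_infinite hp n).ge⟩⟩

theorem seg_comp_nth_count_succ (I : ℕ → Datum) (t : ℕ) :
    seg (I ∘ Nat.nth p) (Nat.count p (t + 1)) =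
      seg (I ∘ Nat.nth p) (Nat.count p t) ++ if p t then [I t] else [] := by
  by_cases ht : p t
  · simp [Nat.count_succ, ht, seg_succ, Nat.nth_count]
  · simp [Nat.count_succ, ht]

theorem seg_comp_nth_count_subset (I : ℕ → Datum) (t : ℕ) :
    seg (I ∘ Nat.nth p) (Nat.count p t) ⊆ seg I t := by
  intro x hx
  obtain ⟨n, hn, rfl⟩ := mem_seg.1 hx
  exact mem_seg.2 ⟨Nat.nth p n, Nat.nth_lt_of_lt_count hn, rfl⟩

end Subsequences

theorem iterative_map_foldlM {S : Type*} [Primcodable S] {f : S → Datum → Part S}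
    (hf : Partrec₂ f) {c : S → ℕ} (hc : Computable c) (hinj : c.Injective) (o : Part S) :
    Iterative fun σ => (o.bind fun s => σ.foldlM f s).map c := by
  obtain ⟨d, hd, hdc⟩ := exists_partrec_leftInverse hc hinj
  refine ⟨fun q => (d q.1).bind fun s => (f s q.2).map c, ?_, fun σ x => ?_⟩
  · exact (hd.comp Computable.fst).bind <|
      (hf.comp Computable.snd (Computable.snd.comp Computable.fst)).map
        (hc.comp Computable.snd).to₂
  · simp [Part.bind_map, Part.map_bind, Part.bind_assoc, hdc]

/-- A state of the canny learner: the current hypothesis of the simulated learner, together with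
the data that have caused a mind change. -/
abbrev MemState := ℕ × List Datum

namespace MemState

variable {h : ℕ × Datum →. ℕ} {o : Part ℕ} {s s' : MemState} {x : Datum} {σ τ : List Datum}

/-- One step of the simulation of the learner with update function `h`: stored data are ignored,
and a datum is stored when it causes a mind change. -/
def step (h : ℕ × Datum →. ℕ) (s : MemState) (x : Datum) : Part MemState :=
  if x ∈ s.2 then Part.some s
  else (h (s.1, x)).map fun e => if e = s.1 then s else (e, x :: s.2)

theorem partrec₂_step (hh : Partrec h) : Partrec₂ (step h) := by
  have hmem : Computable fun q : MemState × Datum => decide (∃ y ∈ q.1.2, y = q.2) :=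
    Primrec.eq.exists_mem_list.decide.to_comp.comp (Computable.snd.comp Computable.fst)
      Computable.snd
  have hhyp : Partrec fun q : MemState × Datum => h (q.1.1, q.2) :=
    hh.comp (.pair (Computable.fst.comp Computable.fst) Computable.snd)
  have hupdate : Computable₂ fun (q : MemState × Datum) (e : ℕ) =>
      bif e == q.1.1 then q.1 else (e, q.2 :: q.1.2) :=
    Computable.cond
      (Primrec.beq.to_comp.comp Computable.snd
        (Computable.fst.comp (Computable.fst.comp Computable.fst)))
      (Computable.fst.comp Computable.fst)
      (.pair Computable.snd <| Computable.list_cons.comp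
        (Computable.snd.comp Computable.fst)
        (Computable.snd.comp (Computable.fst.comp Computable.fst)))
  refine (Partrec.cond hmem Computable.fst.partrec (hhyp.map hupdate)).of_eq fun q => ?_
  simp [step, Bool.cond_eq_ite]

theorem step_of_mem (hx : x ∈ s.2) : step h s x = Part.some s :=
  if_pos hx

theorem map_fst_step_of_notMem (hx : x ∉ s.2) : (step h s x).map Prod.fst = h (s.1, x) := by
  rw [step, if_neg hx, Part.map_map]
  convert Part.map_id' (fun e => ?_) (h (s.1, x)) using 2
  by_cases he : e = s.1 <;> simp [he]

theorem eq_or_fst_ne_and_snd_eq_of_mem_step (hs' : s' ∈ step h s x) :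
    s' = s ∨ s'.1 ≠ s.1 ∧ s'.2 = x :: s.2 := by
  by_cases hx : x ∈ s.2
  · exact .inl (by simpa [step_of_mem hx] using hs')
  · rw [step, if_neg hx] at hs'
    obtain ⟨e, -, rfl⟩ := (Part.mem_map_iff _).1 hs'
    by_cases he : e = s.1 <;> simp [he]

theorem subset_of_mem_foldlM_step (hs' : s' ∈ σ.foldlM (step h) s) : s.2 ⊆ s'.2 := by
  induction σ generalizing s with
  | nil => simp_all
  | cons x σ ih =>
    rw [List.foldlM_cons] at hs'
    obtain ⟨r, hr, hs_r⟩ := Part.mem_bind_iff.1 hs'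
    rcases eq_or_fst_ne_and_snd_eq_of_mem_step hr with rfl | ⟨-, hcons⟩
    · exact ih hs_r
    · exact fun y hy => ih hs_r (by simp [hcons, hy])

/-- The state reached after processing `σ`, where the simulated learner has update function `h` and
initial hypothesis `o`. -/
def run (h : ℕ × Datum →. ℕ) (o : Part ℕ) (σ : List Datum) : Part MemState :=
  (o.map (·, [])).bind fun s => σ.foldlM (step h) s

theorem run_append : run h o (σ ++ τ) = (run h o σ).bind fun s => τ.foldlM (step h) s := by
  simp [run, Part.bind_assoc]

theorem run_concat : run h o (σ ++ [x]) = (run h o σ).bind fun s => step h s x := by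
  simp [run_append]

theorem snd_subset_of_mem_run (hs : s ∈ run h o σ) : s.2 ⊆ σ := by
  induction σ using List.reverseRecOn generalizing s with
  | nil =>
    obtain ⟨e, -, rfl⟩ : ∃ e ∈ o, (e, []) = s := by simpa [run] using hs
    simp
  | append_singleton σ x ih =>
    rw [run_concat] at hs
    obtain ⟨r, hr, hs⟩ := Part.mem_bind_iff.1 hs
    rcases eq_or_fst_ne_and_snd_eq_of_mem_step hs with rfl | ⟨-, hcons⟩
    · exact List.subset_append_of_subset_left _ (ih hr)
    · rw [hcons]
      exact List.cons_subset.2 ⟨by simp, List.subset_append_of_subset_left _ (ih hr)⟩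

theorem partrec_run (hh : Partrec h) (o : Part ℕ) : Partrec (run h o) :=
  (Partrec.const' _).bind <| (partrec₂_foldlM (partrec₂_step hh)).comp Computable.snd Computable.fst

/-- The hypothesis output in state `s`: that of the simulated learner, padded with the stored
data. -/
def hypothesis (s : MemState) : ℕ :=
  pad s.1 (encode s.2)

theorem W_hypothesis (s : MemState) : W s.hypothesis = W s.1 :=
  W_pad _ _

theorem hypothesis_injective : Function.Injective hypothesis := fun _ _ hst =>
  Prod.ext_iff.2 <| (pad_injective2 hst).imp_right fun hl => encode_injective hl

theorem computable_hypothesis : Computable hypothesis :=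
  computable₂_pad.comp Computable.fst (Computable.encode.comp Computable.snd)

end MemState

open MemState

/-- The canny learner simulating the iterative learner with update function `h` and initial
hypothesis `o`, which is undefined if that learner is undefined on the empty sequence. -/
def cannyLearner (h : ℕ × Datum →. ℕ) (o : Part ℕ) : List Datum →. ℕ :=
  fun σ => (run h o σ).map hypothesis

section CannyLearner

variable {h : ℕ × Datum →. ℕ} {o : Part ℕ}

theorem partrec_cannyLearner (hh : Partrec h) (o : Part ℕ) : Partrec (cannyLearner h o) :=
  (partrec_run hh o).map (computable_hypothesis.comp Computable.snd).to₂

theorem iterative_cannyLearner (hh : Partrec h) (o : Part ℕ) : Iterative (cannyLearner h o) :=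
  iterative_map_foldlM (partrec₂_step hh) computable_hypothesis hypothesis_injective _

theorem canny_cannyLearner (h : ℕ × Datum →. ℕ) (o : Part ℕ) : Canny (cannyLearner h o) := by
  rintro σ x b - e e' he he' hne _ ⟨ρ, rfl⟩
  obtain ⟨s, hs, rfl⟩ := (Part.mem_map_iff _).1 (Part.eq_some_iff.1 he)
  obtain ⟨s', hs', rfl⟩ := (Part.mem_map_iff _).1 (Part.eq_some_iff.1 he')
  have hstep : s' ∈ step h s (x, b) := by
    rwa [run_concat, Part.eq_some_iff.2 hs, Part.bind_some] at hs'
  have hstored : (x, b) ∈ s'.2 := by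
    rcases eq_or_fst_ne_and_snd_eq_of_mem_step hstep with rfl | ⟨-, hcons⟩
    · exact absurd rfl hne
    · simp [hcons]
  suffices run h o (σ ++ [(x, b)] ++ ρ ++ [(x, b)]) = run h o (σ ++ [(x, b)] ++ ρ) by
    simp only [cannyLearner, this]
  rw [run_concat]
  rcases Part.eq_none_or_eq_some (run h o (σ ++ [(x, b)] ++ ρ)) with hnone | ⟨r, hr⟩
  · rw [hnone, Part.bind_none]
  · have hmem : r ∈ ρ.foldlM (step h) s' := by
      rwa [run_append, Part.eq_some_iff.2 hs', Part.bind_some, Part.eq_some_iff] at hr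
    rw [hr, Part.bind_some, step_of_mem (subset_of_mem_foldlM_step hmem hstored)]

end CannyLearner

/-- The learner does not ignore the datum presented at time `t`. If the run is undefined by then,
this holds vacuously. -/
def Processed (h : ℕ × Datum →. ℕ) (o : Part ℕ) (I : ℕ → Datum) (t : ℕ) : Prop :=
  ∀ s ∈ run h o (seg I t), I t ∉ s.2

/-- The subsequence of the data of `I` that are not ignored. -/
noncomputable def thinned (h : ℕ × Datum →. ℕ) (o : Part ℕ) (I : ℕ → Datum) : ℕ → Datum :=
  I ∘ Nat.nth (Processed h o I)

open Classical in
/-- The number of data among the first `t` of `I` that are not ignored; this is the simulating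
function through which the canny learner on `I` follows the given learner on `thinned h o I`. -/
noncomputable def delay (h : ℕ × Datum →. ℕ) (o : Part ℕ) (I : ℕ → Datum) : ℕ → ℕ :=
  Nat.count (Processed h o I)

section Simulation

variable {M : List Datum →. ℕ} {h : ℕ × Datum →. ℕ} {L : Set ℕ} {I : ℕ → Datum}

theorem exists_processed_eq (h : ℕ × Datum →. ℕ) (o : Part ℕ) (I : ℕ → Datum) (t : ℕ) :
    ∃ i, Processed h o I i ∧ I i = I t := by
  classical
  have hocc : ∃ i, I i = I t := ⟨t, rfl⟩
  refine ⟨Nat.find hocc, fun s hs hmem => ?_, Nat.find_spec hocc⟩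
  obtain ⟨j, hj, hjt⟩ := mem_seg.1 (snd_subset_of_mem_run hs hmem)
  exact Nat.find_min hocc hj (hjt.trans (Nat.find_spec hocc))

theorem isInformant_thinned (h : ℕ × Datum →. ℕ) (o : Part ℕ) (hI : IsInformant L I) :
    IsInformant L (thinned h o I) :=
  hI.comp_nth (exists_processed_eq h o I)

theorem admissible_delay (h : ℕ × Datum →. ℕ) (o : Part ℕ) (hI : IsInformant L I) :
    Admissible (delay h o I) := by
  classical
  exact admissible_count (hI.infinite_setOf (exists_processed_eq h o I))

theorem seg_thinned_delay_subset (h : ℕ × Datum →. ℕ) (o : Part ℕ) (I : ℕ → Datum) (t : ℕ) :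
    seg (thinned h o I) (delay h o I t) ⊆ seg I t := by
  classical
  exact seg_comp_nth_count_subset I t

open Classical in
theorem seg_thinned_delay_succ (h : ℕ × Datum →. ℕ) (o : Part ℕ) (I : ℕ → Datum) (t : ℕ) :
    seg (thinned h o I) (delay h o I (t + 1)) =
      seg (thinned h o I) (delay h o I t) ++ if Processed h o I t then [I t] else [] :=
  seg_comp_nth_count_succ I t

theorem map_fst_run_seg (hM : ∀ σ x, M (σ ++ [x]) = (M σ).bind fun e => h (e, x))
    (I : ℕ → Datum) (t : ℕ) :
    (run h (M []) (seg I t)).map Prod.fst =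
      M (seg (thinned h (M []) I) (delay h (M []) I t)) := by
  induction t with
  | zero => simp [run, seg, delay, Part.map_map, Part.map_id']
  | succ t ih =>
    rw [seg_succ, run_concat, seg_thinned_delay_succ]
    split_ifs with hproc
    · rw [hM, ← ih, Part.bind_map, Part.map_bind]
      refine Part.ext fun e => ?_
      simp only [Part.mem_bind_iff]
      exact exists_congr fun s => and_congr_right fun hs => by
        rw [map_fst_step_of_notMem (hproc s hs)]
    · obtain ⟨s, hs, hmem⟩ : ∃ s ∈ run h (M []) (seg I t), I t ∈ s.2 := by
        simpa [Processed] using hproc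
      rw [List.append_nil, ← ih, Part.eq_some_iff.2 hs, Part.bind_some, step_of_mem hmem]

theorem exLearnsFrom_cannyLearner (hM : ∀ σ x, M (σ ++ [x]) = (M σ).bind fun e => h (e, x))
    (hdelay : Admissible (delay h (M []) I)) (hL : ExLearnsFrom M L (thinned h (M []) I)) :
    ExLearnsFrom (cannyLearner h (M [])) L I := by
  obtain ⟨n, e, hWe, hconv⟩ := hL
  obtain ⟨t₀, ht₀⟩ := hdelay.2 n
  have hfst : ∀ t ≥ t₀, ∃ s ∈ run h (M []) (seg I t), s.1 = e := fun t ht => by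
    have hmap := map_fst_run_seg hM I t
    rw [hconv _ (ht₀.trans (hdelay.1 ht)), Part.eq_some_iff] at hmap
    exact (Part.mem_map_iff _).1 hmap
  obtain ⟨s, hs, hse⟩ := hfst t₀ le_rfl
  have hconst : ∀ t ≥ t₀, s ∈ run h (M []) (seg I t) := fun t ht => by
    induction t, ht using Nat.le_induction with
    | base => exact hs
    | succ t ht ih =>
      obtain ⟨s', hs', hse'⟩ := hfst (t + 1) (by lia)
      have hstep : s' ∈ step h s (I t) := by
        rwa [seg_succ, run_concat, Part.eq_some_iff.2 ih, Part.bind_some] at hs'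
      rcases eq_or_fst_ne_and_snd_eq_of_mem_step hstep with rfl | ⟨hne, -⟩
      · exact hs'
      · exact absurd (hse'.trans hse.symm) hne
  refine ⟨t₀, s.hypothesis, by rw [W_hypothesis, hse, hWe], fun t ht => ?_⟩
  rw [cannyLearner, Part.eq_some_iff.2 (hconst t ht), Part.map_some]

theorem exists_cannyLearner_eq_some_and_W_eq
    (hM : ∀ σ x, M (σ ++ [x]) = (M σ).bind fun e => h (e, x)) {t : ℕ}
    (hdom : (M (seg (thinned h (M []) I) (delay h (M []) I t))).Dom) :
    ∃ e e', M (seg (thinned h (M []) I) (delay h (M []) I t)) = Part.some e ∧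
      cannyLearner h (M []) (seg I t) = Part.some e' ∧ W e' = W e := by
  rw [← map_fst_run_seg hM] at hdom ⊢
  obtain ⟨s, hs⟩ := Part.dom_iff_mem.1 (show (run h (M []) (seg I t)).Dom from hdom)
  refine ⟨s.1, s.hypothesis, ?_, ?_, W_hypothesis s⟩ <;>
    simp [cannyLearner, Part.eq_some_iff.2 hs]

end Simulation

/-- For every iterative learner `M` and every semantically delayable restriction `δ`
there is a canny iterative learner `N` with `InfδEx(M) ⊆ InfδEx(N)`. -/
theorem canny_normal_form_delayable (M : List Datum →. ℕ) (hM : Partrec M)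
    (hit : Iterative M) (δ : (List Datum →. ℕ) → (ℕ → Datum) → Prop)
    (hδ : SemDelayable δ) :
    ∃ N : List Datum →. ℕ, Partrec N ∧ Iterative N ∧ Canny N ∧
      ∀ L : Set ℕ, InfDeltaEx δ M L → InfDeltaEx δ N L := by
  have ⟨h, hh, hMh⟩ := hit
  refine ⟨cannyLearner h (M []), partrec_cannyLearner hh _, iterative_cannyLearner hh _,
    canny_cannyLearner h _, fun L ⟨hL, hδL⟩ => ⟨fun I hI => ?_, fun I hI => ?_⟩⟩
  · exact exLearnsFrom_cannyLearner hMh (admissible_delay h _ hI)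
      (hL _ (isInformant_thinned h _ hI))
  · have hthin := isInformant_thinned h (M []) hI
    have hsub := seg_thinned_delay_subset h (M []) I
    refine hδ _ (admissible_delay h (M []) hI) M _ _ I ⟨L, hthin⟩ ⟨L, hI⟩ (fun t => ?_)
      (hδL _ hthin)
    exact ⟨fun _ hx => hsub t hx, fun _ hx => hsub t hx,
      exists_cannyLearner_eq_some_and_W_eq hMh ((hL _ hthin).dom hit _)⟩
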